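/- arXiv:2601.18879 — 2 statements merged into one kernel-verified Lean document; each statement's English description precedes it below -/
import Mathlib

section
/- Let n be a natural number and let F, G, H, I be n × n matrices over F₂ that pairwise commute. Define the block matrices D₁ = [F G H I] (size n × 4n), D₂ = [[G,H,I,0,0,0],[F,0,0,H,I,0],[0,F,0,G,0,I],[0,0,F,0,G,H]] (size 4n × 6n), D₃ = [[H,I,0,0],[G,0,I,0],[0,G,H,0],[F,0,0,I],[0,F,0,H],[0,0,F,G]] (size 6n × 4n), and D₄ = [I; H; G; F] (size 4n × n, a column of blocks). Then D₁ * D₂ = 0, D₂ * D₃ = 0, and D₃ * D₄ = 0; equivalently, the length-4 multivariate multicycle code with P_X = D₂, P_Z = D₃ᵀ, M_X = D₁, M_Z = D₄ᵀ satisfies the CSS orthogonality condition and both the X- and Z-metacheck conditions. -/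
open Matrix

/-- A matrix built from an `r × c` array of `n × n` blocks. -/
def blockOfBlocks {α : Type*} {n : ℕ} (r c : ℕ)
    (B : Fin r → Fin c → Matrix (Fin n) (Fin n) α) :
    Matrix (Fin r × Fin n) (Fin c × Fin n) α :=
  Matrix.of fun p q => B p.1 q.1 p.2 q.2

theorem blockOfBlocks_mul_eq_zero {n r c d : ℕ}
    (A : Fin r → Fin c → Matrix (Fin n) (Fin n) (ZMod 2))
    (B : Fin c → Fin d → Matrix (Fin n) (Fin n) (ZMod 2))
    (h : ∀ i k, ∑ j, A i j * B j k = 0) :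
    blockOfBlocks r c A * blockOfBlocks c d B = 0 := by
  ext ⟨i, a⟩ ⟨k, b⟩
  have := congrFun (congrFun (h i k) a) b
  simpa [Matrix.mul_apply, blockOfBlocks, Fintype.sum_prod_type, Matrix.sum_apply] using this

/-- Let `F, G, H, I` be pairwise commuting `n × n` matrices over `𝔽₂ = ZMod 2`.
With the boundary maps `D₁ = [F G H I]`,
`D₂ = [[G,H,I,0,0,0],[F,0,0,H,I,0],[0,F,0,G,0,I],[0,0,F,0,G,H]]`,
`D₃ = [[H,I,0,0],[G,0,I,0],[0,G,H,0],[F,0,0,I],[0,F,0,H],[0,0,F,G]]`,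
`D₄ = [I; H; G; F]` of the Koszul complex on `(F,G,H,I)`, we have
`D₁ * D₂ = 0`, `D₂ * D₃ = 0`, and `D₃ * D₄ = 0`: the CSS orthogonality
condition and both metacheck conditions of the length-4 multivariate
multicycle code with `P_X = D₂`, `P_Z = D₃ᵀ`, `M_X = D₁`, `M_Z = D₄ᵀ`. -/
theorem multivariate_multicycle_t4_boundary_maps_square_zero
    (n : ℕ) (F G H I : Matrix (Fin n) (Fin n) (ZMod 2))
    (hFG : F * G = G * F) (hFH : F * H = H * F) (hFI : F * I = I * F)
    (hGH : G * H = H * G) (hGI : G * I = I * G) (hHI : H * I = I * H) :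
    blockOfBlocks 1 4 ![![F, G, H, I]] *
      blockOfBlocks 4 6 ![![G, H, I, 0, 0, 0], ![F, 0, 0, H, I, 0],
        ![0, F, 0, G, 0, I], ![0, 0, F, 0, G, H]] = 0 ∧
    blockOfBlocks 4 6 ![![G, H, I, 0, 0, 0], ![F, 0, 0, H, I, 0],
        ![0, F, 0, G, 0, I], ![0, 0, F, 0, G, H]] *
      blockOfBlocks 6 4 ![![H, I, 0, 0], ![G, 0, I, 0], ![0, G, H, 0],
        ![F, 0, 0, I], ![0, F, 0, H], ![0, 0, F, G]] = 0 ∧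
    blockOfBlocks 6 4 ![![H, I, 0, 0], ![G, 0, I, 0], ![0, G, H, 0],
        ![F, 0, 0, I], ![0, F, 0, H], ![0, 0, F, G]] *
      blockOfBlocks 4 1 ![![I], ![H], ![G], ![F]] = 0 := by
  have hc : ∀ X : Matrix (Fin n) (Fin n) (ZMod 2), X + X = 0 := fun X => by
    ext a b
    exact CharTwo.add_self_eq_zero _
  refine ⟨?_, ?_, ?_⟩ <;> apply blockOfBlocks_mul_eq_zero <;> intro i k <;>
    fin_cases i <;> fin_cases k <;>
    simp [Fin.sum_univ_succ, hFG, hFH, hFI, hGH, hGI, hHI, hc]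
end

section
/- Let S = F₂[w, x, y, z] / ⟨w² − 1, x² − 1, y² − 1, z² − 1⟩, a 16-dimensional commutative F₂-algebra, and let F = 1 + wx, G = 1 + xy, H = 1 + yz, I = 1 + wz in S. Let d₂ : S⁶ → S⁴ and d₃ : S⁴ → S⁶ be the S-linear maps given by multiplication by the block matrices D₂ = [[G,H,I,0,0,0],[F,0,0,H,I,0],[0,F,0,G,0,I],[0,0,F,0,G,H]] and D₃ = [[H,I,0,0],[G,0,I,0],[0,G,H,0],[F,0,0,I],[0,F,0,H],[0,0,F,G]], viewed as F₂-linear maps between F₂-vector spaces of dimensions 96 and 64. Then d₂ ∘ d₃ = 0 and dim_{F₂} ker(d₂) − dim_{F₂} im(d₃) = 12; i.e., this multivariate multicycle code encodes k = 12 logical qubits in n = 96 physical qubits. -/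
open MvPolynomial Matrix

set_option synthInstance.maxHeartbeats 1000000
set_option maxHeartbeats 2000000

noncomputable section

/-- The ideal `⟨w²−1, x²−1, y²−1, z²−1⟩` in `𝔽₂[w,x,y,z]`. -/
def relIdeal : Ideal (MvPolynomial (Fin 4) (ZMod 2)) :=
  Ideal.span {X 0 ^ 2 - 1, X 1 ^ 2 - 1, X 2 ^ 2 - 1, X 3 ^ 2 - 1}

/-- The 16-dimensional commutative `𝔽₂`-algebra `S = 𝔽₂[w,x,y,z]/⟨w²−1, x²−1, y²−1, z²−1⟩`. -/
abbrev Squot : Type := MvPolynomial (Fin 4) (ZMod 2) ⧸ relIdeal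

def wq : Squot := Ideal.Quotient.mk relIdeal (X 0)
def xq : Squot := Ideal.Quotient.mk relIdeal (X 1)
def yq : Squot := Ideal.Quotient.mk relIdeal (X 2)
def zq : Squot := Ideal.Quotient.mk relIdeal (X 3)

/-- `F = 1 + wx`. -/ def Fq : Squot := 1 + wq * xq
/-- `G = 1 + xy`. -/ def Gq : Squot := 1 + xq * yq
/-- `H = 1 + yz`. -/ def Hq : Squot := 1 + yq * zq
/-- `I = 1 + wz`. -/ def Iq : Squot := 1 + wq * zq

/-- Second Koszul boundary map `D₂`. -/
def D2 : Matrix (Fin 4) (Fin 6) Squot :=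
  !![Gq, Hq, Iq, 0, 0, 0;
     Fq, 0, 0, Hq, Iq, 0;
     0, Fq, 0, Gq, 0, Iq;
     0, 0, Fq, 0, Gq, Hq]

/-- Third Koszul boundary map `D₃`. -/
def D3 : Matrix (Fin 6) (Fin 4) Squot :=
  !![Hq, Iq, 0, 0;
     Gq, 0, Iq, 0;
     0, Gq, Hq, 0;
     Fq, 0, 0, Iq;
     0, Fq, 0, Hq;
     0, 0, Fq, Gq]

/-- exponents of `wx, xy, yz` -/
abbrev KK : Type := ZMod 2 × ZMod 2 × ZMod 2

def kidx (k : KK) : ℕ := 4 * k.1.val + 2 * k.2.1.val + k.2.2.val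

def kdec (t : ℕ) : KK :=
  (((t / 4 % 2 : ℕ) : ZMod 2), ((t / 2 % 2 : ℕ) : ZMod 2), ((t % 2 : ℕ) : ZMod 2))

def cF : Option KK := some (1, 0, 0)
def cG : Option KK := some (0, 1, 0)
def cH : Option KK := some (0, 0, 1)
def cI : Option KK := some (1, 1, 1)

def C2 : Matrix (Fin 4) (Fin 6) (Option KK) :=
  !![cG, cH, cI, none, none, none;
     cF, none, none, cH, cI, none;
     none, cF, none, cG, none, cI;
     none, none, cF, none, cG, cH]

def C3 : Matrix (Fin 6) (Fin 4) (Option KK) :=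
  !![cH, cI, none, none;
     cG, none, cI, none;
     none, cG, cH, none;
     cF, none, none, cI;
     none, cF, none, cH;
     none, none, cF, cG]

def ent (o : Option KK) (k k' : KK) : ZMod 2 :=
  match o with
  | none => 0
  | some g => (if k' = k then 1 else 0) + (if k' = g + k then 1 else 0)

def blow {m n : ℕ} (C : Matrix (Fin m) (Fin n) (Option KK)) :
    Matrix (Fin m × KK) (Fin n × KK) (ZMod 2) :=
  fun p q => ent (C p.1 q.1) p.2 q.2

def bitm (l : List ℕ) (r c : ℕ) : ZMod 2 := if (l.getD r 0).testBit c then 1 else 0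

def matU {m n : ℕ} [NeZero n] (piv : List ℕ) (C : Matrix (Fin m) (Fin n) (Option KK)) :
    Matrix (Fin m × KK) (Fin 21) (ZMod 2) :=
  (blow C).submatrix id (fun t : Fin 21 =>
    ((Fin.ofNat n (piv.getD t 0 / 8), kdec (piv.getD t 0)) : Fin n × KK))

def matB (n : ℕ) (l : List ℕ) : Matrix (Fin 21) (Fin n × KK) (ZMod 2) :=
  fun t q => bitm l t (8 * q.1 + kidx q.2)

def chk1 {m n : ℕ} [NeZero n] (C : Matrix (Fin m) (Fin n) (Option KK)) (piv V : List ℕ) : Bool :=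
  decide (∀ (i : Fin m × KK) (j : Fin n × KK), @Eq (ZMod 2) (ent (C i.1 j.1) i.2 j.2)
    (∑ t : Fin 21, matU piv C i t * matB n V t j))

def chk2 {m n : ℕ} [NeZero n] (C : Matrix (Fin m) (Fin n) (Option KK)) (piv L : List ℕ) : Bool :=
  decide (∀ i j : Fin 21,
    @Eq (ZMod 2) (∑ q : Fin m × KK, matB m L i q * matU piv C q j) (if i = j then 1 else 0))

lemma rank_blow {m n : ℕ} [NeZero n] (C : Matrix (Fin m) (Fin n) (Option KK))
    (piv V L : List ℕ) (h1 : chk1 C piv V = true) (h2 : chk2 C piv L = true) :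
    (blow C).rank = 21 := by
  have h1' : blow C = matU piv C * matB n V := by ext i j; rw [Matrix.mul_apply]; exact of_decide_eq_true h1 i j
  have h2' : matB m L * matU piv C = 1 := by ext i j; rw [Matrix.mul_apply, Matrix.one_apply]; exact of_decide_eq_true h2 i j
  apply le_antisymm
  · rw [h1']
    exact (Matrix.rank_mul_le_left _ _).trans ((Matrix.rank_le_card_width _).trans (by simp))
  · have h3 : matU piv C = blow C * (1 : Matrix (Fin n × KK) (Fin n × KK) (ZMod 2)).submatrix id
        (fun t : Fin 21 =>
          ((Fin.ofNat n (piv.getD t 0 / 8), kdec (piv.getD t 0)) : Fin n × KK)) := by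
      ext i j
      simp [matU, Matrix.mul_apply, Matrix.one_apply]
    have h4 := Matrix.rank_mul_le_right (matB m L) (matU piv C)
    rw [h2', Matrix.rank_one, Fintype.card_fin] at h4
    refine h4.trans ?_
    rw [h3]
    exact Matrix.rank_mul_le_left _ _

set_option maxRecDepth 100000 in
lemma rank2 : (blow C2).rank = 21 :=
  rank_blow C2
    [0, 1, 2, 3, 4, 5, 8, 9, 10, 11, 12, 16, 17, 18, 19, 24, 25, 26, 32, 33, 40]
    [53567643762753, 53275589132418, 225300025704516, 225214126358664, 53463759241296,
     53120165003424, 255088055607552, 39585102963200, 72569109627904, 138541149489152,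
     263882806456320, 53120156631040, 53463755128832, 211449834373120, 211793436213248,
     187795716964352, 112153038159872, 225179967946752, 224665444286464, 225030516506624,
     280375465082880]
    [67900676, 118232635, 100877598, 100878622, 67896580, 118229511, 85917701, 1858150,
     1704026, 1464934, 84869125, 118229624, 67896644, 33753634, 16975121, 102580548, 1989222,
     100876574, 100862498, 100861214, 983130]
    (by decide +kernel) (by decide +kernel)

set_option maxRecDepth 100000 in
lemma rank3 : (blow C3).rank = 21 :=
  rank_blow C3
    [0, 1, 2, 3, 4, 5, 6, 8, 9, 10, 11, 12, 13, 16, 17, 18, 19, 20, 24, 25, 26]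
    [2292236417, 3093299330, 3636510852, 402653320, 2426454160, 1348468896, 817938624,
     817905920, 817922560, 3221242880, 3221260288, 12603392, 12623872, 1356922880, 2686582784,
     1346633728, 2693267456, 15728640, 2566914048, 2852126720, 3422552064]
    [1116708541763, 1099730064896, 4479648531, 134217728, 1116842757377, 1121154633226,
     17381262081, 17381262146, 17381262145, 4345495570, 4345298961, 131850, 66309,
     1121154635600, 1099595846656, 1121154634320, 1099595518208, 331520, 151001154,
     21558925322, 21525364754]
    (by decide +kernel) (by decide +kernel)

/-- exponents of `w, wx, xy, yz` -/
abbrev GG : Type := ZMod 2 × KK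

abbrev AA : Type := AddMonoidAlgebra (ZMod 2) GG

def gen : Fin 4 → GG := ![(1, 0, 0, 0), (1, 1, 0, 0), (1, 1, 1, 0), (1, 1, 1, 1)]

def phi0 : MvPolynomial (Fin 4) (ZMod 2) →ₐ[ZMod 2] AA :=
  MvPolynomial.aeval (fun i => AddMonoidAlgebra.single (gen i) 1)

lemma phi0_rel (a : MvPolynomial (Fin 4) (ZMod 2)) (ha : a ∈ relIdeal) : phi0 a = 0 := by
  have : relIdeal ≤ RingHom.ker phi0 := by
    unfold relIdeal
    rw [Ideal.span_le]
    have key : ∀ i : Fin 4, gen i + gen i = 0 := by decide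
    have h : ∀ i : Fin 4, phi0 (X i ^ 2 - 1) = 0 := by
      intro i
      rw [map_sub, map_one, map_pow]
      simp only [phi0, aeval_X, pow_two, AddMonoidAlgebra.single_mul_single, key, mul_one]
      exact sub_self _
    rintro p (rfl | rfl | rfl | rfl) <;> exact h _
  exact this ha

def phi : Squot →ₐ[ZMod 2] AA := Ideal.Quotient.liftₐ relIdeal phi0 phi0_rel

lemma sq_q (i : Fin 4) :
    (Ideal.Quotient.mk relIdeal (X i)) * (Ideal.Quotient.mk relIdeal (X i)) = 1 := by
  rw [← map_mul, ← map_one (Ideal.Quotient.mk relIdeal), Ideal.Quotient.eq, ← pow_two]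
  apply Ideal.subset_span
  fin_cases i <;> simp

lemma hw : wq * wq = 1 := sq_q 0
lemma hx : xq * xq = 1 := sq_q 1
lemma hy : yq * yq = 1 := sq_q 2
lemma hz : zq * zq = 1 := sq_q 3

lemma pow_val (s : Squot) (h : s * s = 1) (a b : ZMod 2) :
    s ^ (a + b).val = s ^ a.val * s ^ b.val := by
  have : ∀ a b : ZMod 2, (a + b).val = a.val + b.val ∨ (a + b).val + 2 = a.val + b.val := by decide
  rcases this a b with h1 | h1
  · rw [h1, pow_add]
  · rw [← pow_add, ← h1, pow_add, pow_two, h, mul_one]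

def psi0 : Multiplicative GG →* Squot where
  toFun g := wq ^ (g.toAdd.1).val * (wq * xq) ^ (g.toAdd.2.1).val *
    (xq * yq) ^ (g.toAdd.2.2.1).val * (yq * zq) ^ (g.toAdd.2.2.2).val
  map_one' := by simp
  map_mul' a b := by
    have h1 : (wq * xq) * (wq * xq) = 1 := by rw [mul_mul_mul_comm, hw, hx, mul_one]
    have h2 : (xq * yq) * (xq * yq) = 1 := by rw [mul_mul_mul_comm, hx, hy, mul_one]
    have h3 : (yq * zq) * (yq * zq) = 1 := by rw [mul_mul_mul_comm, hy, hz, mul_one]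
    simp only [toAdd_mul, Prod.fst_add, Prod.snd_add]
    rw [pow_val _ hw, pow_val _ h1, pow_val _ h2, pow_val _ h3]
    ring

def psi : AA →ₐ[ZMod 2] Squot := AddMonoidAlgebra.lift (ZMod 2) Squot GG psi0

lemma phi_w : phi wq = AddMonoidAlgebra.single (1, 0, 0, 0) 1 := by
  change phi0 (X 0) = _
  simp [phi0, gen]
lemma phi_x : phi xq = AddMonoidAlgebra.single (1, 1, 0, 0) 1 := by
  change phi0 (X 1) = _
  simp [phi0, gen]
lemma phi_y : phi yq = AddMonoidAlgebra.single (1, 1, 1, 0) 1 := by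
  change phi0 (X 2) = _
  simp [phi0, gen]
lemma phi_z : phi zq = AddMonoidAlgebra.single (1, 1, 1, 1) 1 := by
  change phi0 (X 3) = _
  simp [phi0, gen]

lemma phi_psi : phi.comp psi = AlgHom.id (ZMod 2) AA := by
  apply AddMonoidAlgebra.algHom_ext
  intro g
  simp only [AlgHom.comp_apply, psi, AddMonoidAlgebra.lift_single, one_smul, AlgHom.id_apply]
  simp only [psi0, MonoidHom.coe_mk, OneHom.coe_mk, map_mul, map_pow, phi_w, phi_x, phi_y, phi_z,
    AddMonoidAlgebra.single_mul_single, AddMonoidAlgebra.single_pow, one_pow, mul_one]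
  congr 1
  · revert g
    decide
  · ext

lemma psi_gen (i : Fin 4) : psi (AddMonoidAlgebra.single (gen i) 1) =
    Ideal.Quotient.mk relIdeal (X i) := by
  simp only [psi, AddMonoidAlgebra.lift_single, one_smul]
  have hw := hw
  have hx := hx
  have hy := hy
  have v1 : (1 : ZMod 2).val = 1 := rfl
  fin_cases i
  · change _ = wq
    simp [psi0, gen, v1]
  · change _ = xq
    simp [psi0, gen, v1]
    linear_combination xq * hw
  · change _ = yq
    simp [psi0, gen, v1]
    linear_combination xq * xq * yq * hw + yq * hx
  · change _ = zq
    simp [psi0, gen, v1]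
    linear_combination xq * xq * yq * yq * zq * hw + yq * yq * zq * hx + zq * hy

lemma psi_phi : psi.comp phi = AlgHom.id (ZMod 2) Squot := by
  apply Ideal.Quotient.algHom_ext
  apply MvPolynomial.algHom_ext
  intro i
  change psi (phi0 (X i)) = Ideal.Quotient.mk relIdeal (X i)
  rw [← psi_gen]
  simp [phi0]

def eqv : Squot ≃ₐ[ZMod 2] AA := AlgEquiv.ofAlgHom phi psi phi_psi psi_phi

def ee : Squot ≃ₗ[ZMod 2] (GG → ZMod 2) where
  toFun s g := (eqv s).coeff g
  invFun f := eqv.symm (AddMonoidAlgebra.ofCoeff (Finsupp.equivFunOnFinite.symm f))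
  map_add' a b := by ext g; simp
  map_smul' a b := by ext g; simp
  left_inv s := by
    apply eqv.injective
    rw [AlgEquiv.apply_symm_apply]
    ext g
    simp
  right_inv f := by ext g; simp

def val (o : Option KK) : Squot :=
  match o with
  | none => 0
  | some g => 1 + psi (AddMonoidAlgebra.single ((0, g) : GG) 1)

lemma val_none : val none = 0 := rfl
lemma val_F : val cF = Fq := by
  have v1 : (1 : ZMod 2).val = 1 := rfl
  simp [val, cF, psi, psi0, Fq, v1]
lemma val_G : val cG = Gq := by
  have v1 : (1 : ZMod 2).val = 1 := rfl
  simp [val, cG, psi, psi0, Gq, v1]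
lemma val_H : val cH = Hq := by
  have v1 : (1 : ZMod 2).val = 1 := rfl
  simp [val, cH, psi, psi0, Hq, v1]
lemma val_I : val cI = Iq := by
  have v1 : (1 : ZMod 2).val = 1 := rfl
  have hx := hx
  have hy := hy
  simp [val, cI, psi, psi0, Iq, v1]
  linear_combination wq * yq * yq * zq * hx + wq * zq * hy

lemma D2_eq : D2 = C2.map val := by
  ext i j
  fin_cases i <;> fin_cases j <;> simp [D2, C2, val_none, val_F, val_G, val_H, val_I]

lemma D3_eq : D3 = C3.map val := by
  ext i j
  fin_cases i <;> fin_cases j <;> simp [D3, C3, val_none, val_F, val_G, val_H, val_I]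

lemma ee_val_mul (o : Option KK) (c : Squot) (v : ZMod 2) (k : KK) :
    ee (val o * c) (v, k) = ∑ k', ent o k k' * ee c (v, k') := by
  cases o with
  | none => simp [val, ent]
  | some g =>
    have h : eqv (psi (AddMonoidAlgebra.single ((0, g) : GG) 1)) =
        AddMonoidAlgebra.single ((0, g) : GG) 1 := eqv.apply_symm_apply _
    have hn : -g + k = g + k := by
      clear h
      revert g k
      decide
    simp only [val, ent, add_mul, one_mul, Finset.sum_add_distrib, ite_mul, zero_mul,
      Finset.sum_ite_eq', Finset.mem_univ, if_true]
    change (eqv _).coeff _ = (eqv c).coeff _ + (eqv c).coeff _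
    rw [map_add, map_mul, h]
    simp [hn]

lemma finrank_S : Module.finrank (ZMod 2) Squot = 16 := by
  rw [ee.finrank_eq]
  simp

instance finS : Module.Finite (ZMod 2) Squot := Module.Finite.equiv ee.symm

def bigE (n : ℕ) : (Fin n → Squot) ≃ₗ[ZMod 2] (ZMod 2 → (Fin n × KK → ZMod 2)) where
  toFun c v q := ee (c q.1) (v, q.2)
  invFun f j := ee.symm (fun g => f g.1 (j, g.2))
  map_add' a b := by ext v q; simp
  map_smul' a b := by ext v q; simp
  left_inv c := by ext j; simp
  right_inv f := by ext v q; simp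

lemma bigE_mul {m n : ℕ} (C : Matrix (Fin m) (Fin n) (Option KK)) (c : Fin n → Squot)
    (v : ZMod 2) : bigE m ((C.map val).mulVec c) v = (blow C).mulVec (bigE n c v) := by
  ext q
  change ee (∑ j, val (C q.1 j) * c j) (v, q.2) =
    ∑ p : Fin n × KK, ent (C q.1 p.1) q.2 p.2 * ee (c p.1) (v, p.2)
  rw [map_sum, Finset.sum_apply, Fintype.sum_prod_type]
  exact Finset.sum_congr rfl fun j _ => ee_val_mul _ _ _ _

def kerE {m n : ℕ} (C : Matrix (Fin m) (Fin n) (Option KK)) :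
    LinearMap.ker ((C.map val).mulVecLin.restrictScalars (ZMod 2)) ≃ₗ[ZMod 2]
      (ZMod 2 → LinearMap.ker (blow C).mulVecLin) where
  toFun c v := ⟨bigE n c.1 v, by
    have h : (C.map val).mulVec c.1 = 0 := c.2
    rw [LinearMap.mem_ker, Matrix.mulVecLin_apply, ← bigE_mul, h, map_zero]
    rfl⟩
  invFun f := ⟨(bigE n).symm (fun v => (f v).1), by
    change (C.map val).mulVec _ = 0
    apply (bigE m).injective
    rw [map_zero]
    funext v
    rw [bigE_mul, LinearEquiv.apply_symm_apply]
    exact (f v).2⟩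
  map_add' a b := by
    ext v q
    exact congrFun (congrFun (map_add (bigE n) a.1 b.1) v) q
  map_smul' a b := by
    ext v q
    exact congrFun (congrFun (map_smul (bigE n) a b.1) v) q
  left_inv c := by ext1; simp
  right_inv f := by ext v q; simp

lemma finrank_ker {m n : ℕ} (C : Matrix (Fin m) (Fin n) (Option KK)) (h : (blow C).rank = 21) :
    Module.finrank (ZMod 2) (LinearMap.ker ((C.map val).mulVecLin.restrictScalars (ZMod 2))) + 42 =
      16 * n := by
  rw [(kerE C).finrank_eq]
  have h1 := LinearMap.finrank_range_add_finrank_ker (blow C).mulVecLin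
  rw [Matrix.rank] at h
  rw [h] at h1
  simp at h1
  rw [Module.finrank_pi_fintype]
  simp
  omega

lemma D2D3 : D2 * D3 = 0 := by
  have h2 : (2 : Squot) = 0 := by
    have h := map_ofNat (algebraMap (ZMod 2) Squot) 2
    rw [← h]
    exact map_zero (algebraMap (ZMod 2) Squot)
  ext i j
  fin_cases i <;> fin_cases j <;> simp [D2, D3, Matrix.mul_apply, Fin.sum_univ_succ] <;>
    first
      | linear_combination (Gq * Hq) * h2
      | linear_combination (Gq * Iq) * h2
      | linear_combination (Hq * Iq) * h2
      | linear_combination (Fq * Gq) * h2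
      | linear_combination (Fq * Hq) * h2
      | linear_combination (Fq * Iq) * h2

/-- With `S = 𝔽₂[w,x,y,z]/⟨w²−1, x²−1, y²−1, z²−1⟩` (16-dimensional over `𝔽₂`)
and `F = 1+wx`, `G = 1+xy`, `H = 1+yz`, `I = 1+wz`, the `𝔽₂`-linear maps
`d₂ : S⁶ → S⁴` and `d₃ : S⁴ → S⁶` given by the Koszul block matrices `D₂`,
`D₃` (between spaces of dimensions 96 and 64) satisfy `d₂ ∘ d₃ = 0` and
`dim ker d₂ − dim im d₃ = 12`: this multivariate multicycle code encodes
`k = 12` logical qubits in `n = 96` physical qubits. -/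
theorem mm_code_96_12 :
    Module.finrank (ZMod 2) Squot = 16 ∧
    Module.finrank (ZMod 2) (Fin 6 → Squot) = 96 ∧
    Module.finrank (ZMod 2) (Fin 4 → Squot) = 64 ∧
    (D2.mulVecLin.restrictScalars (ZMod 2)) ∘ₗ
      (D3.mulVecLin.restrictScalars (ZMod 2)) = 0 ∧
    Module.finrank (ZMod 2)
        (LinearMap.ker (D2.mulVecLin.restrictScalars (ZMod 2))) -
      Module.finrank (ZMod 2)
        (LinearMap.range (D3.mulVecLin.restrictScalars (ZMod 2))) = 12 := by
  refine ⟨finrank_S, ?_, ?_, ?_, ?_⟩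
  · rw [Module.finrank_pi_fintype]
    simp [finrank_S]
  · rw [Module.finrank_pi_fintype]
    simp [finrank_S]
  · apply LinearMap.ext
    intro c
    change D2.mulVec (D3.mulVec c) = 0
    rw [Matrix.mulVec_mulVec, D2D3, Matrix.zero_mulVec]
  · have h1 := LinearMap.finrank_range_add_finrank_ker (D3.mulVecLin.restrictScalars (ZMod 2))
    have h2 := finrank_ker C2 rank2
    have h3 := finrank_ker C3 rank3
    rw [← D2_eq] at h2
    rw [← D3_eq] at h3
    rw [Module.finrank_pi_fintype] at h1
    simp only [finrank_S, Finset.sum_const, Finset.card_univ, Fintype.card_fin, smul_eq_mul] at h1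
    omega

end
end
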